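/- arXiv:2107.09248 — 4 statements merged into one kernel-verified Lean document; each statement's English description precedes it below -/
import Mathlib

section
/- Gårding inequality (coercivity) for the bilinear form of the credit rating migration problem: suppose in addition that |σ'(x)| ≤ K for all x, where K ≥ 0. Set C₁ = σ_H²/2 and C₂ = (σ_L·K)/2 + σ_H²/2. Then C₁ > 0 and for every smooth function u : ℝ → ℝ with compact support contained in Ω, a(u,u) ≥ C₁ ‖u‖₁² − C₂ ‖u‖², where ‖u‖ is the L²-norm and ‖u‖₁ is the H¹-norm. -/
/-!
Since `u' u = (u²)' / 2`, integrating by parts turns the first-order term `∫ b u' u` into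
`-½ ∫ b' u²`; there is no boundary term because `b u²` and its derivative are integrable. For
`b = r + σ²/2` we have `b' = σ σ' ≤ σ_L K`, so this term costs at most `(σ_L K / 2) ‖u‖²`, while
ellipticity `σ² / 2 ≥ σ_H² / 2` bounds the second-order term below by
`(σ_H² / 2) ‖u'‖² = (σ_H² / 2) (‖u‖₁² - ‖u‖²)`.
-/

open MeasureTheory Real

section WeightedSquares

variable {X : Type*} [MeasurableSpace X] {μ : Measure X} {a f g : X → ℝ}

theorem integrable_mul_mul_of_memLp_top (ha : MemLp a ⊤ μ) (hf : MemLp f 2 μ) (hg : MemLp g 2 μ) :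
    Integrable (fun x ↦ a x * f x * g x) μ :=
  (hf.mul (r := 2) ha).integrable_mul hg

theorem const_mul_integral_sq_le_integral_mul_mul {c : ℝ} (ha : MemLp a ⊤ μ)
    (hca : ∀ᵐ x ∂μ, c ≤ a x) (hf : MemLp f 2 μ) :
    c * ∫ x, f x ^ 2 ∂μ ≤ ∫ x, a x * f x * f x ∂μ := by
  rw [← integral_const_mul]
  refine integral_mono_ae (hf.integrable_sq.const_mul c)
    (integrable_mul_mul_of_memLp_top ha hf hf) ?_
  filter_upwards [hca] with x hx
  calc c * f x ^ 2 ≤ a x * f x ^ 2 := by gcongr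
    _ = a x * f x * f x := by ring

theorem integral_mul_mul_le_const_mul_integral_sq {C : ℝ} (ha : MemLp a ⊤ μ)
    (haC : ∀ᵐ x ∂μ, a x ≤ C) (hf : MemLp f 2 μ) :
    ∫ x, a x * f x * f x ∂μ ≤ C * ∫ x, f x ^ 2 ∂μ := by
  have h := const_mul_integral_sq_le_integral_mul_mul (c := -C) ha.neg
    (haC.mono fun x hx ↦ neg_le_neg hx) hf
  simp only [Pi.neg_apply, neg_mul, integral_neg] at h
  exact neg_le_neg_iff.mp h

theorem sq_sqrt_integral_sq : √(∫ x, f x ^ 2 ∂μ) ^ 2 = ∫ x, f x ^ 2 ∂μ :=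
  sq_sqrt (integral_nonneg fun _ ↦ sq_nonneg _)

theorem sq_sqrt_integral_sq_add_sq (hf : MemLp f 2 μ) (hg : MemLp g 2 μ) :
    √(∫ x, f x ^ 2 + g x ^ 2 ∂μ) ^ 2 = ∫ x, f x ^ 2 ∂μ + ∫ x, g x ^ 2 ∂μ := by
  rw [sq_sqrt (integral_nonneg fun _ ↦ by positivity),
    integral_add hf.integrable_sq hg.integrable_sq]

end WeightedSquares

section GardingInequality

variable {a b b' u u' : ℝ → ℝ}

theorem integral_mul_deriv_mul_self (hb : ∀ x, HasDerivAt b (b' x) x)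
    (hu : ∀ x, HasDerivAt u (u' x) x) (hb_top : MemLp b ⊤) (hb'_top : MemLp b' ⊤)
    (hu_two : MemLp u 2) (hu'_two : MemLp u' 2) :
    ∫ x, b x * u' x * u x = -(1 / 2) * ∫ x, b' x * u x * u x := by
  have hb'uu := integrable_mul_mul_of_memLp_top hb'_top hu_two hu_two
  have hbu'u := (integrable_mul_mul_of_memLp_top hb_top hu'_two hu_two).const_mul 2
  have product_rule (x : ℝ) :
      HasDerivAt (fun y ↦ b y * u y * u y) (b' x * u x * u x + 2 * (b x * u' x * u x)) x :=
    (((hb x).fun_mul (hu x)).fun_mul (hu x)).congr_deriv (by ring)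
  have no_boundary_term : ∫ x, (b' x * u x * u x + 2 * (b x * u' x * u x)) = 0 :=
    integral_eq_zero_of_hasDerivAt_of_integrable product_rule (hb'uu.add hbu'u)
      (integrable_mul_mul_of_memLp_top hb_top hu_two hu_two)
  rw [integral_add hb'uu hbu'u, integral_const_mul] at no_boundary_term
  linarith

theorem garding_of_le_of_deriv_le {c M : ℝ} (ha : MemLp a ⊤) (hca : ∀ᵐ x, c ≤ a x)
    (hb : ∀ x, HasDerivAt b (b' x) x) (hu : ∀ x, HasDerivAt u (u' x) x)
    (hb_top : MemLp b ⊤) (hb'_top : MemLp b' ⊤) (hb'M : ∀ᵐ x, b' x ≤ M)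
    (hu_two : MemLp u 2) (hu'_two : MemLp u' 2) :
    c * (∫ x, u' x ^ 2) - M / 2 * (∫ x, u x ^ 2) ≤
      (∫ x, a x * u' x * u' x) + ∫ x, b x * u' x * u x := by
  have second_order : c * (∫ x, u' x ^ 2) ≤ ∫ x, a x * u' x * u' x :=
    const_mul_integral_sq_le_integral_mul_mul ha hca hu'_two
  have first_order : ∫ x, b x * u' x * u x = -(1 / 2) * ∫ x, b' x * u x * u x :=
    integral_mul_deriv_mul_self hb hu hb_top hb'_top hu_two hu'_two
  have zeroth_order : ∫ x, b' x * u x * u x ≤ M * ∫ x, u x ^ 2 :=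
    integral_mul_mul_le_const_mul_integral_sq hb'_top hb'M hu_two
  linarith

end GardingInequality

theorem bilinear_form_garding_general {r σH σL K : ℝ} {σ u : ℝ → ℝ} (hσH : 0 ≤ σH)
    (hσ : Differentiable ℝ σ) (hσ_lb : ∀ x, σH ≤ σ x) (hσ_ub : ∀ x, σ x ≤ σL)
    (hσ' : ∀ x, |deriv σ x| ≤ K) (hu : Differentiable ℝ u) (hu_two : MemLp u 2)
    (hu'_two : MemLp (deriv u) 2) :
    (∫ x : ℝ, (1/2) * (σ x)^2 * deriv u x * deriv u x)
      + (∫ x : ℝ, (r + (1/2) * (σ x)^2) * deriv u x * u x)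
      ≥ (σH^2 / 2) * (√(∫ x : ℝ, (u x)^2 + (deriv u x)^2))^2
        - (σL * K / 2 + σH^2 / 2) * (√(∫ x : ℝ, (u x)^2))^2 := by
  have σ_nonneg (x : ℝ) : 0 ≤ σ x := hσH.trans (hσ_lb x)
  have σ_top : MemLp σ ⊤ := memLp_top_of_bound hσ.continuous.aestronglyMeasurable σL
    (.of_forall fun x ↦ (abs_of_nonneg (σ_nonneg x)).trans_le (hσ_ub x))
  have σ'_top : MemLp (deriv σ) ⊤ :=
    memLp_top_of_bound (aestronglyMeasurable_deriv σ _) K (.of_forall hσ')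
  have diffusion_top : MemLp (fun x ↦ (1/2) * (σ x)^2) ⊤ := by
    simpa only [sq, Pi.mul_apply] using (σ_top.mul (r := ⊤) σ_top).const_mul (1/2)
  have diffusion_ge (x : ℝ) : σH^2 / 2 ≤ (1/2) * (σ x)^2 := by
    linarith [pow_le_pow_left₀ hσH (hσ_lb x) 2]
  have drift_deriv (x : ℝ) : HasDerivAt (fun y ↦ r + (1/2) * (σ y)^2) (σ x * deriv σ x) x :=
    ((((hσ x).hasDerivAt.fun_pow 2).const_mul (1/2)).const_add r).congr_deriv (by ring)
  have drift_deriv_le (x : ℝ) : σ x * deriv σ x ≤ σL * K :=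
    calc σ x * deriv σ x ≤ σ x * K :=
          mul_le_mul_of_nonneg_left (le_of_abs_le (hσ' x)) (σ_nonneg x)
      _ ≤ σL * K := mul_le_mul_of_nonneg_right (hσ_ub x) ((abs_nonneg _).trans (hσ' x))
  have garding := garding_of_le_of_deriv_le diffusion_top (.of_forall diffusion_ge) drift_deriv
    (fun x ↦ (hu x).hasDerivAt) ((memLp_top_const r).add diffusion_top)
    (σ'_top.mul σ_top) (.of_forall drift_deriv_le) hu_two hu'_two
  rw [sq_sqrt_integral_sq_add_sq hu_two hu'_two, sq_sqrt_integral_sq]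
  linarith

/-- Gårding inequality (coercivity) for the bilinear form of the
credit rating migration problem: with `C₁ = σ_H²/2` and `C₂ = σ_L·K/2 + σ_H²/2`,
one has `C₁ > 0` and `a(u,u) ≥ C₁‖u‖₁² − C₂‖u‖²`. -/
theorem bilinear_form_garding
    (α β : ℝ) (hαβ : α < β)
    (r : ℝ) (hr : 0 < r)
    (σH σL : ℝ) (hσH : 0 < σH) (hHL : σH < σL)
    (σ : ℝ → ℝ) (hσ : ContDiff ℝ 1 σ)
    (hσ_lb : ∀ x, σH ≤ σ x) (hσ_ub : ∀ x, σ x ≤ σL)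
    (K : ℝ) (hK : 0 ≤ K) (hσ' : ∀ x, |deriv σ x| ≤ K) :
    σH^2 / 2 > 0 ∧
    ∀ u : ℝ → ℝ, ContDiff ℝ (⊤ : ℕ∞) u → HasCompactSupport u →
      tsupport u ⊆ Set.Ioo α β →
      (∫ x : ℝ, (1/2) * (σ x)^2 * deriv u x * deriv u x)
        + (∫ x : ℝ, (r + (1/2) * (σ x)^2) * deriv u x * u x)
        ≥ (σH^2 / 2) * (Real.sqrt (∫ x : ℝ, (u x)^2 + (deriv u x)^2))^2
          - (σL * K / 2 + σH^2 / 2) * (Real.sqrt (∫ x : ℝ, (u x)^2))^2 :=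
  ⟨by positivity, fun _ hu hu_supp _ ↦ bilinear_form_garding_general hσH.le
    (hσ.differentiable one_ne_zero) hσ_lb hσ_ub hσ' (hu.differentiable (by simp))
    (hu.continuous.memLp_of_hasCompactSupport hu_supp)
    ((hu.continuous_deriv (by simp)).memLp_of_hasCompactSupport hu_supp.deriv)⟩
end

section
/- Nonnegativity of the quadratic form under nonincreasing volatility: suppose in addition that σ'(x) ≤ 0 for all x ∈ Ω. Then for every smooth function u : ℝ → ℝ with compact support contained in Ω, a(u,u) ≥ (σ_H²/2) ∫_ℝ u'(x)² dx; in particular a(u,u) ≥ 0. -/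
open MeasureTheory Real

/-!
Since `u' u = (u²)' / 2`, integrating by parts turns the drift term `∫ b u' u` into
`-(1/2) ∫ b' u²`. For `b = r + σ²/2` one has `b' = σ σ' ≤ 0` on `Ω`, so this term is
nonnegative and the diffusion term alone gives the lower bound.
-/

theorem integrable_mul_of_tsupport_subset {X R : Type*} [TopologicalSpace X] [MeasurableSpace X]
    [OpensMeasurableSpace X] [NonUnitalNormedRing R] {μ : Measure X} [IsFiniteMeasureOnCompacts μ]
    {Ω : Set X} {f g : X → R} (hΩ : IsOpen Ω) (hf : ContinuousOn f Ω) (hg : Continuous g)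
    (hg_supp : HasCompactSupport g) (hgΩ : tsupport g ⊆ Ω) :
    Integrable (fun x ↦ f x * g x) μ := by
  have hfg_cont : Continuous fun x ↦ f x * g x :=
    (hf.mul hg.continuousOn).continuous_of_tsupport_subset hΩ
      ((tsupport_mul_subset_right (f := f)).trans hgΩ)
  exact hfg_cont.integrable_of_hasCompactSupport hg_supp.mul_left

theorem const_mul_integral_le_integral_mul {X : Type*} [MeasurableSpace X] {μ : Measure X}
    {c : ℝ} {a f : X → ℝ} (hf_nonneg : 0 ≤ f) (hca : ∀ x ∈ Function.support f, c ≤ a x)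
    (hf : Integrable f μ) (haf : Integrable (fun x ↦ a x * f x) μ) :
    c * ∫ x, f x ∂μ ≤ ∫ x, a x * f x ∂μ := by
  rw [← integral_const_mul]
  refine integral_mono (hf.const_mul c) haf fun x ↦ ?_
  by_cases hx : f x = 0
  · simp [hx]
  · exact mul_le_mul_of_nonneg_right (hca x hx) (hf_nonneg x)

theorem two_mul_integral_mul_deriv_mul_self {A : Type*} [NormedCommRing A] [NormedAlgebra ℝ A]
    {Ω : Set ℝ} {b u : ℝ → A} (hΩ : IsOpen Ω) (hb : ContDiffOn ℝ 1 b Ω) (hu : ContDiff ℝ 1 u)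
    (hu_supp : HasCompactSupport u) (huΩ : tsupport u ⊆ Ω) :
    2 * ∫ x, b x * (deriv u x * u x) = -∫ x, deriv b x * u x ^ 2 := by
  have hsq_supp : HasCompactSupport fun x ↦ u x ^ 2 := hu_supp.comp_left (g := (· ^ 2)) (by simp)
  have hsqΩ : tsupport (fun x ↦ u x ^ 2) ⊆ Ω :=
    (tsupport_comp_subset (g := (· ^ 2)) (by simp) u).trans huΩ
  have hb_deriv {x : ℝ} (hx : x ∈ Ω) : HasDerivAt b (deriv b x) x :=
    hb.differentiableOn_one.hasDerivAt (hΩ.mem_nhds hx)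
  have hsq_deriv (x : ℝ) : HasDerivAt (fun x ↦ u x ^ 2) (2 * (deriv u x * u x)) x :=
    ((hu.differentiable_one x).hasDerivAt.pow 2).congr_deriv (by push_cast; ring)
  have hb_int : Integrable fun x ↦ b x * (deriv u x * u x) :=
    integrable_mul_of_tsupport_subset hΩ hb.continuousOn
      (hu.continuous_deriv_one.mul hu.continuous) hu_supp.mul_left
      (tsupport_mul_subset_right.trans huΩ)
  have hb_two_mul (x : ℝ) :
      b x * (2 * (deriv u x * u x)) = b x * (deriv u x * u x) + b x * (deriv u x * u x) := by
    ring
  calc 2 * ∫ x, b x * (deriv u x * u x)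
      = ∫ x, b x * (2 * (deriv u x * u x)) := by
        rw [two_mul, ← integral_add hb_int hb_int]
        simp only [hb_two_mul]
    _ = -∫ x, deriv b x * u x ^ 2 :=
        integral_mul_deriv_eq_deriv_mul_of_integrable
          (fun _ hx ↦ hb_deriv (hsqΩ hx)) (fun x _ ↦ hsq_deriv x)
          ((hb_int.add hb_int).congr (.of_forall fun x ↦ (hb_two_mul x).symm))
          (integrable_mul_of_tsupport_subset hΩ (hb.continuousOn_deriv_of_isOpen hΩ le_rfl)
            (hu.continuous.pow 2) hsq_supp hsqΩ)
          (integrable_mul_of_tsupport_subset hΩ hb.continuousOn (hu.continuous.pow 2)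
            hsq_supp hsqΩ)

theorem integral_mul_deriv_mul_self_nonneg {Ω : Set ℝ} {b u : ℝ → ℝ} (hΩ : IsOpen Ω)
    (hb : ContDiffOn ℝ 1 b Ω) (hb' : ∀ x ∈ Ω, deriv b x ≤ 0) (hu : ContDiff ℝ 1 u)
    (hu_supp : HasCompactSupport u) (huΩ : tsupport u ⊆ Ω) :
    0 ≤ ∫ x, b x * (deriv u x * u x) := by
  have hparts := two_mul_integral_mul_deriv_mul_self hΩ hb hu hu_supp huΩ
  have hb'_sq : ∫ x, deriv b x * u x ^ 2 ≤ 0 := by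
    refine integral_nonpos fun x ↦ ?_
    by_cases hx : x ∈ Ω
    · exact mul_nonpos_of_nonpos_of_nonneg (hb' x hx) (sq_nonneg (u x))
    · simp [image_eq_zero_of_notMem_tsupport fun h ↦ hx (huΩ h)]
  linarith

/-- The bilinear form of the one-dimensional operator `-(a u')' + b u'` with diffusion
coefficient `a` and drift coefficient `b`. The credit rating migration problem has `a = σ²/2`
and `b = r + σ²/2`. -/
noncomputable def driftDiffusionForm (a b u v : ℝ → ℝ) : ℝ :=
  (∫ x, a x * deriv u x * deriv v x) + ∫ x, b x * deriv u x * v x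

theorem const_mul_integral_deriv_sq_le_driftDiffusionForm_self {Ω : Set ℝ} {c : ℝ}
    {a b u : ℝ → ℝ} (hΩ : IsOpen Ω) (ha : ContinuousOn a Ω) (hca : ∀ x ∈ Ω, c ≤ a x)
    (hb : ContDiffOn ℝ 1 b Ω) (hb' : ∀ x ∈ Ω, deriv b x ≤ 0) (hu : ContDiff ℝ 1 u)
    (hu_supp : HasCompactSupport u) (huΩ : tsupport u ⊆ Ω) :
    c * ∫ x, deriv u x ^ 2 ≤ driftDiffusionForm a b u u := by
  have hsq_cont : Continuous fun x ↦ deriv u x ^ 2 := hu.continuous_deriv_one.pow 2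
  have hsq_supp : HasCompactSupport fun x ↦ deriv u x ^ 2 :=
    hu_supp.deriv.comp_left (g := (· ^ 2)) (by simp)
  have hsqΩ : tsupport (fun x ↦ deriv u x ^ 2) ⊆ Ω :=
    (tsupport_comp_subset (g := (· ^ 2)) (by simp) (deriv u)).trans
      (tsupport_deriv_subset.trans huΩ)
  have hdiffusion : c * ∫ x, deriv u x ^ 2 ≤ ∫ x, a x * deriv u x ^ 2 :=
    const_mul_integral_le_integral_mul (fun x ↦ sq_nonneg (deriv u x))
      (fun x hx ↦ hca x (hsqΩ (subset_tsupport _ hx)))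
      (hsq_cont.integrable_of_hasCompactSupport hsq_supp)
      (integrable_mul_of_tsupport_subset hΩ ha hsq_cont hsq_supp hsqΩ)
  have hdrift : 0 ≤ ∫ x, b x * (deriv u x * u x) :=
    integral_mul_deriv_mul_self_nonneg hΩ hb hb' hu hu_supp huΩ
  simpa only [driftDiffusionForm, mul_assoc, ← sq] using le_add_of_le_of_nonneg hdiffusion hdrift

theorem quadratic_form_nonneg_of_nonincreasing_vol_general {Ω : Set ℝ} {r σH : ℝ} {σ u : ℝ → ℝ}
    (hΩ : IsOpen Ω) (hσH : 0 ≤ σH) (hσ : ContDiffOn ℝ 1 σ Ω) (hσ_lb : ∀ x ∈ Ω, σH ≤ σ x)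
    (hσ' : ∀ x ∈ Ω, deriv σ x ≤ 0) (hu : ContDiff ℝ 1 u) (hu_supp : HasCompactSupport u)
    (huΩ : tsupport u ⊆ Ω) :
    σH ^ 2 / 2 * ∫ x, deriv u x ^ 2 ≤
      driftDiffusionForm (fun x ↦ (1 / 2) * σ x ^ 2) (fun x ↦ r + (1 / 2) * σ x ^ 2) u u := by
  have hdiffusion_lb (x : ℝ) (hx : x ∈ Ω) : σH ^ 2 / 2 ≤ (1 / 2) * σ x ^ 2 := by
    linarith [pow_le_pow_left₀ hσH (hσ_lb x hx) 2]
  have hdrift_antitone (x : ℝ) (hx : x ∈ Ω) : deriv (fun y ↦ r + (1 / 2) * σ y ^ 2) x ≤ 0 := by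
    have hσ_deriv : HasDerivAt σ (deriv σ x) x :=
      hσ.differentiableOn_one.hasDerivAt (hΩ.mem_nhds hx)
    have hdrift : HasDerivAt (fun y ↦ r + (1 / 2) * σ y ^ 2) (σ x * deriv σ x) x :=
      (((hσ_deriv.pow 2).const_mul (1 / 2)).const_add r).congr_deriv (by push_cast; ring)
    rw [hdrift.deriv]
    exact mul_nonpos_of_nonneg_of_nonpos (hσH.trans (hσ_lb x hx)) (hσ' x hx)
  exact const_mul_integral_deriv_sq_le_driftDiffusionForm_self hΩ
    (continuousOn_const.mul (hσ.continuousOn.pow 2)) hdiffusion_lb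
    (contDiffOn_const.add (contDiffOn_const.mul (hσ.pow 2))) hdrift_antitone hu hu_supp huΩ

/-- Nonnegativity of the quadratic form under nonincreasing
volatility: if `σ' ≤ 0` on `Ω`, then `a(u,u) ≥ (σ_H²/2) ∫ u'²`, and in
particular `a(u,u) ≥ 0`. -/
theorem quadratic_form_nonneg_of_nonincreasing_vol
    (α β : ℝ) (hαβ : α < β)
    (r : ℝ) (hr : 0 < r)
    (σH σL : ℝ) (hσH : 0 < σH) (hHL : σH < σL)
    (σ : ℝ → ℝ) (hσ : ContDiff ℝ 1 σ)
    (hσ_lb : ∀ x, σH ≤ σ x) (hσ_ub : ∀ x, σ x ≤ σL)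
    (hσ' : ∀ x ∈ Set.Ioo α β, deriv σ x ≤ 0)
    (u : ℝ → ℝ)
    (hu : ContDiff ℝ (⊤ : ℕ∞) u)
    (hu_supp : HasCompactSupport u)
    (hu_suppΩ : tsupport u ⊆ Set.Ioo α β) :
    ((∫ x : ℝ, (1/2) * (σ x)^2 * deriv u x * deriv u x)
        + (∫ x : ℝ, (r + (1/2) * (σ x)^2) * deriv u x * u x)
      ≥ (σH^2 / 2) * ∫ x : ℝ, (deriv u x)^2) ∧
    ((∫ x : ℝ, (1/2) * (σ x)^2 * deriv u x * deriv u x)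
        + (∫ x : ℝ, (r + (1/2) * (σ x)^2) * deriv u x * u x) ≥ 0) := by
  have hcoercive := quadratic_form_nonneg_of_nonincreasing_vol_general (r := r) isOpen_Ioo hσH.le
    hσ.contDiffOn (fun x _ ↦ hσ_lb x) hσ' (hu.of_le (by simp)) hu_supp hu_suppΩ
  exact ⟨hcoercive, hcoercive.trans' (by positivity)⟩
end

section
/- Unconditional stability of the backward Euler Galerkin scheme: let V be a real inner product space, Δt > 0, and for each n ≥ 1 let aₙ : V × V → ℝ be a bilinear form with aₙ(v,v) ≥ 0 for all v ∈ V. Let (uⁿ)_{n≥0} be a sequence in V satisfying the backward Euler recursion ⟨uⁿ − uⁿ⁻¹, v⟩ + Δt·aₙ(uⁿ, v) = 0 for all v ∈ V and all n ≥ 1. Then ‖uⁿ‖ ≤ ‖u⁰‖ for every n ≥ 0. -/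
open scoped InnerProductSpace

/-! Testing the scheme with `v = uⁿ` makes the form term nonnegative, so `⟨uⁿ − uⁿ⁻¹, uⁿ⟩ ≤ 0`.
Since `2⟨uⁿ − uⁿ⁻¹, uⁿ⟩ = ‖uⁿ‖² − ‖uⁿ⁻¹‖² + ‖uⁿ − uⁿ⁻¹‖²`, no step increases the norm,
whatever the step size. -/

section

variable {𝕜 V : Type*} [RCLike 𝕜] [SeminormedAddCommGroup V] [InnerProductSpace 𝕜 V]

theorem two_mul_re_inner_sub_left_self (x y : V) :
    2 * RCLike.re ⟪x - y, x⟫_𝕜 = ‖x‖ ^ 2 - ‖y‖ ^ 2 + ‖x - y‖ ^ 2 := by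
  have h := norm_sub_sq (𝕜 := 𝕜) x (x - y)
  rw [sub_sub_cancel, inner_re_symm] at h
  linarith

theorem norm_le_of_re_inner_sub_left_self_nonpos {x y : V}
    (h : RCLike.re ⟪x - y, x⟫_𝕜 ≤ 0) : ‖x‖ ≤ ‖y‖ := by
  refine le_of_sq_le_sq ?_ (norm_nonneg y)
  linarith [two_mul_re_inner_sub_left_self (𝕜 := 𝕜) x y, sq_nonneg ‖x - y‖]

theorem backward_euler_unconditional_stability_general {Δt : ℕ → ℝ} (hΔt : ∀ n, 0 ≤ Δt n)
    {a : ℕ → V → V → 𝕜} {u : ℕ → V}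
    (ha : ∀ n, 0 ≤ RCLike.re (a (n + 1) (u (n + 1)) (u (n + 1))))
    (hu : ∀ n, ⟪u (n + 1) - u n, u (n + 1)⟫_𝕜 +
      (Δt n : 𝕜) * a (n + 1) (u (n + 1)) (u (n + 1)) = 0) :
    Antitone fun n ↦ ‖u n‖ := by
  refine antitone_nat_of_succ_le fun n ↦ norm_le_of_re_inner_sub_left_self_nonpos (𝕜 := 𝕜) ?_
  have energy_balance := congrArg RCLike.re (hu n)
  rw [map_add, RCLike.re_ofReal_mul, map_zero] at energy_balance
  linarith [mul_nonneg (hΔt n) (ha n)]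

end

/-- Unconditional stability of the backward Euler Galerkin scheme:
if each bilinear form `aₙ` is positive semidefinite on the diagonal and
`⟨uⁿ − uⁿ⁻¹, v⟩ + Δt·aₙ(uⁿ,v) = 0` for all `v`, then `‖uⁿ‖ ≤ ‖u⁰‖`. -/
theorem backward_euler_unconditional_stability
    {V : Type*} [NormedAddCommGroup V] [InnerProductSpace ℝ V]
    (Δt : ℝ) (hΔt : 0 < Δt)
    (a : ℕ → V →ₗ[ℝ] V →ₗ[ℝ] ℝ)
    (ha : ∀ n, 1 ≤ n → ∀ v : V, 0 ≤ a n v v)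
    (u : ℕ → V)
    (hu : ∀ n, 1 ≤ n → ∀ v : V,
      ⟪u n - u (n - 1), v⟫_ℝ + Δt * a n (u n) v = 0) :
    ∀ n : ℕ, ‖u n‖ ≤ ‖u 0‖ :=
  fun n ↦ backward_euler_unconditional_stability_general (𝕜 := ℝ) (a := fun n v w ↦ a n v w)
    (fun _ ↦ hΔt.le) (fun n ↦ ha (n + 1) n.succ_pos _) (fun n ↦ hu (n + 1) n.succ_pos _) n.zero_le
end

section
/- Aubin–Nitsche L²-error bound: let V and H be real inner product spaces, ι : V → H a continuous linear map, B : V × V → ℝ a bilinear form with |B(w,v)| ≤ M‖w‖_V‖v‖_V for all w, v ∈ V, and S a subspace of V. Let u ∈ V and u_h ∈ S satisfy the Galerkin orthogonality B(u − u_h, v) = 0 for all v ∈ S. Suppose there exists ρ ≥ 0 such that for every ψ ∈ H there exist φ_ψ ∈ V with B(w, φ_ψ) = ⟨ι w, ψ⟩_H for all w ∈ V, and v_ψ ∈ S with ‖φ_ψ − v_ψ‖_V ≤ ρ‖ψ‖_H. Then ‖ι(u − u_h)‖_H ≤ M·ρ·‖u − u_h‖_V. -/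
open scoped InnerProductSpace

/-!
Duality turns the `H`-norm of `ι (u - uh)` into the supremum of `⟪ψ, ι (u - uh)⟫` over unit vectors
`ψ`. The adjoint problem rewrites this pairing as `B (u - uh) φ`, and Galerkin orthogonality lets
`φ` be replaced by its approximation error `φ - v`, which contributes the extra factor `ρ`.
-/

lemma mul_norm_nonneg_of_norm_apply_le {V E : Type*} [SeminormedAddGroup V]
    [SeminormedAddGroup E] {b : V → V → E} {M : ℝ}
    (hb : ∀ w v, ‖b w v‖ ≤ M * ‖w‖ * ‖v‖) (w : V) : 0 ≤ M * ‖w‖ := by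
  have h_diag : 0 ≤ M * ‖w‖ * ‖w‖ := (norm_nonneg _).trans (hb w w)
  rcases (norm_nonneg w).eq_or_lt with hw | hw
  · rw [← hw, mul_zero]
  · exact nonneg_of_mul_nonneg_left h_diag hw

lemma norm_map_le_mul_norm_sub_of_map_eq_zero {F V E : Type*} [SeminormedAddGroup V]
    [SeminormedAddGroup E] [FunLike F V E] [AddMonoidHomClass F V E] {f : F} {C : ℝ}
    (hf : ∀ x, ‖f x‖ ≤ C * ‖x‖) {v : V} (hv : f v = 0) (x : V) : ‖f x‖ ≤ C * ‖x - v‖ :=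
  calc ‖f x‖ = ‖f (x - v)‖ := by rw [map_sub, hv, sub_zero]
    _ ≤ C * ‖x - v‖ := hf (x - v)

lemma norm_le_of_forall_norm_inner_le (𝕜 : Type*) {H : Type*} [RCLike 𝕜]
    [SeminormedAddCommGroup H] [InnerProductSpace 𝕜 H] {x : H} {C : ℝ} (hC : 0 ≤ C)
    (h : ∀ y : H, ‖⟪y, x⟫_𝕜‖ ≤ C * ‖y‖) : ‖x‖ ≤ C := by
  rw [← innerSL_apply_norm 𝕜 x]
  refine (innerSL 𝕜 x).opNorm_le_bound hC fun y ↦ ?_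
  rw [innerSL_apply_apply, norm_inner_symm]
  exact h y

-- An arbitrary `σ` lets `B` be bilinear as well as sesquilinear.
theorem aubin_nitsche_L2_error_bound_general
    {𝕜 V H : Type*} [RCLike 𝕜] [SeminormedAddCommGroup V] [Module 𝕜 V]
    [SeminormedAddCommGroup H] [InnerProductSpace 𝕜 H]
    {σ : 𝕜 →+* 𝕜} (ι : V →ₗ[𝕜] H) (B : V →ₗ[𝕜] V →ₛₗ[σ] 𝕜)
    {M : ℝ} (hbound : ∀ w v : V, ‖B w v‖ ≤ M * ‖w‖ * ‖v‖)
    (S : Submodule 𝕜 V) {u uh : V} (horth : ∀ v ∈ S, B (u - uh) v = 0)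
    {ρ : ℝ} (hρ : 0 ≤ ρ)
    (hdual : ∀ ψ : H, ∃ φ : V, (∀ w : V, B w φ = ⟪ψ, ι w⟫_𝕜) ∧
      ∃ v ∈ S, ‖φ - v‖ ≤ ρ * ‖ψ‖) :
    ‖ι (u - uh)‖ ≤ M * ρ * ‖u - uh‖ := by
  have hMe : 0 ≤ M * ‖u - uh‖ := mul_norm_nonneg_of_norm_apply_le hbound (u - uh)
  rw [mul_right_comm]
  refine norm_le_of_forall_norm_inner_le 𝕜 (mul_nonneg hMe hρ) fun ψ ↦ ?_
  obtain ⟨φ, hφ, v, hvS, hφv⟩ := hdual ψ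
  calc ‖⟪ψ, ι (u - uh)⟫_𝕜‖ = ‖B (u - uh) φ‖ := by rw [hφ]
    _ ≤ M * ‖u - uh‖ * ‖φ - v‖ :=
      norm_map_le_mul_norm_sub_of_map_eq_zero (hbound (u - uh)) (horth v hvS) φ
    _ ≤ M * ‖u - uh‖ * (ρ * ‖ψ‖) := mul_le_mul_of_nonneg_left hφv hMe
    _ = M * ‖u - uh‖ * ρ * ‖ψ‖ := (mul_assoc _ _ _).symm

/-- Aubin–Nitsche L²-error bound: under Galerkin orthogonality and
solvability of the adjoint problem with approximation constant `ρ`, one has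
`‖ι(u − u_h)‖_H ≤ M ρ ‖u − u_h‖_V`. -/
theorem aubin_nitsche_L2_error_bound
    {V H : Type*} [NormedAddCommGroup V] [InnerProductSpace ℝ V]
    [NormedAddCommGroup H] [InnerProductSpace ℝ H]
    (ι : V →L[ℝ] H)
    (B : V →ₗ[ℝ] V →ₗ[ℝ] ℝ)
    (M : ℝ) (hbound : ∀ w v : V, |B w v| ≤ M * ‖w‖ * ‖v‖)
    (S : Submodule ℝ V)
    (u : V) (uh : V) (huh : uh ∈ S)
    (horth : ∀ v ∈ S, B (u - uh) v = 0)
    (ρ : ℝ) (hρ : 0 ≤ ρ)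
    (hdual : ∀ ψ : H, ∃ φ : V, (∀ w : V, B w φ = ⟪ι w, ψ⟫_ℝ) ∧
      ∃ v ∈ S, ‖φ - v‖ ≤ ρ * ‖ψ‖) :
    ‖ι (u - uh)‖ ≤ M * ρ * ‖u - uh‖ :=
  aubin_nitsche_L2_error_bound_general (ι : V →ₗ[ℝ] H) B hbound S horth hρ
    (by simpa only [real_inner_comm, ContinuousLinearMap.coe_coe] using hdual)
end
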